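/- For every y ∈ X and every t > 0, the time derivative of the forward marginal satisfies |d/dt q_t(y)| ≤ q_t y · ( m̄(y) · exp(−t)/(1 − exp(−t)) + (d − m̄(y)) ), where d/dt q_t(y) denotes the derivative at t of the function u ↦ q_u y (which exists for all t) and m̄(y) is the number of coordinates i with y i = m. -/

import Mathlib

open Finset

/-- Per-token absorbing transition kernel. -/
noncomputable def absK (S : ℕ) (m : Fin S) (t : ℝ) (a b : Fin S) : ℝ :=
  if a = b then (if a = m then 1 else Real.exp (-t))
  else (if b = m then 1 - Real.exp (-t) else 0)

/-- Forward marginal at time `t` of the absorbing diffusion started at `q0`. -/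
noncomputable def fwd (S d : ℕ) (m : Fin S) (q0 : (Fin d → Fin S) → ℝ) (t : ℝ)
    (x : Fin d → Fin S) : ℝ :=
  ∑ x0 : Fin d → Fin S, q0 x0 * ∏ i : Fin d, absK S m t (x0 i) (x i)

/-- Number of masked coordinates. -/
def nmask (S d : ℕ) (m : Fin S) (x : Fin d → Fin S) : ℕ :=
  (Finset.univ.filter (fun i => x i = m)).card

/-- Time derivative of the kernel. -/
noncomputable def absK' (S : ℕ) (m : Fin S) (t : ℝ) (a b : Fin S) : ℝ :=
  if a = b then (if a = m then 0 else -Real.exp (-t))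
  else (if b = m then Real.exp (-t) else 0)

theorem absK_hasDeriv (S : ℕ) (m : Fin S) (t : ℝ) (a b : Fin S) :
    HasDerivAt (fun u => absK S m u a b) (absK' S m t a b) t := by
  have h : HasDerivAt (fun u : ℝ => Real.exp (-u)) (-Real.exp (-t)) t := by
    simpa using (hasDerivAt_neg t).exp
  unfold absK absK'
  split_ifs
  · exact hasDerivAt_const _ _
  · exact h
  · simpa using h.const_sub 1
  · exact hasDerivAt_const _ _

theorem absK_nonneg (S : ℕ) (m : Fin S) (t : ℝ) (ht : 0 < t) (a b : Fin S) :
    0 ≤ absK S m t a b := by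
  have h : Real.exp (-t) < 1 := by simpa using ht
  have h0 := Real.exp_pos (-t)
  unfold absK
  split_ifs <;> linarith

theorem absK'_bound (S : ℕ) (m : Fin S) (t : ℝ) (ht : 0 < t) (a b : Fin S) :
    |absK' S m t a b| ≤ absK S m t a b *
      (if b = m then Real.exp (-t) / (1 - Real.exp (-t)) else 1) := by
  have h : Real.exp (-t) < 1 := by simpa using ht
  have h0 := Real.exp_pos (-t)
  have h1 : 0 < 1 - Real.exp (-t) := by linarith
  unfold absK absK'
  by_cases hab : a = b
  · subst hab
    by_cases ha : a = m
    · simp only [ha, if_true, abs_zero]; positivity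
    · simp [ha]
  · by_cases hb : b = m
    · simp only [hab, hb, if_true, if_false]
      rw [if_neg (by rwa [hb] at hab), if_neg (by rwa [hb] at hab), abs_of_pos h0, mul_div_cancel₀ _ h1.ne']
    · simp [hab, hb]

theorem fwd_hasDeriv (S d : ℕ) (m : Fin S) (q0 : (Fin d → Fin S) → ℝ)
    (y : Fin d → Fin S) (t : ℝ) :
    HasDerivAt (fun u : ℝ => fwd S d m q0 u y)
      (∑ x0 : Fin d → Fin S, q0 x0 * ∑ i : Fin d,
        (∏ j ∈ Finset.univ.erase i, absK S m t (x0 j) (y j)) * absK' S m t (x0 i) (y i)) t := by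
  unfold fwd
  refine HasDerivAt.fun_sum fun x0 _ => HasDerivAt.const_mul _ ?_
  simpa using HasDerivAt.fun_finset_prod (u := Finset.univ)
    (fun i _ => absK_hasDeriv S m t (x0 i) (y i))

/-- The forward marginal is differentiable in time, and for `t > 0` its time
derivative satisfies `|d/dt q_t(y)| ≤ q_t(y) (m̄(y) e^{-t}/(1-e^{-t}) + (d - m̄(y)))`. -/
theorem absorbing_marginal_deriv_bound (S d : ℕ) (hS : 2 ≤ S) (hd : 1 ≤ d) (m : Fin S)
    (q0 : (Fin d → Fin S) → ℝ) (hq0 : ∀ x, 0 ≤ q0 x)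
    (hq0sum : ∑ x : Fin d → Fin S, q0 x = 1) (y : Fin d → Fin S) :
    (∀ t : ℝ, DifferentiableAt ℝ (fun u : ℝ => fwd S d m q0 u y) t) ∧
      ∀ t : ℝ, 0 < t →
        |deriv (fun u : ℝ => fwd S d m q0 u y) t|
          ≤ fwd S d m q0 t y *
              ((nmask S d m y : ℝ) * Real.exp (-t) / (1 - Real.exp (-t))
                + ((d : ℝ) - (nmask S d m y : ℝ))) := by
  refine ⟨fun t => (fwd_hasDeriv S d m q0 y t).differentiableAt, fun t ht => ?_⟩
  rw [(fwd_hasDeriv S d m q0 y t).deriv]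
  have hc : (nmask S d m y : ℝ) * Real.exp (-t) / (1 - Real.exp (-t))
      + ((d : ℝ) - (nmask S d m y : ℝ))
      = ∑ i : Fin d, (if y i = m then Real.exp (-t) / (1 - Real.exp (-t)) else 1) := by
    have hcard := Finset.card_filter_add_card_filter_not (s := (Finset.univ : Finset (Fin d)))
      (fun i => y i = m)
    rw [Finset.card_univ, Fintype.card_fin] at hcard
    have hcard' : (d : ℝ) = (nmask S d m y : ℝ)
        + ((Finset.univ.filter (fun i => ¬ y i = m)).card : ℝ) := by
      unfold nmask
      exact_mod_cast hcard.symm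
    rw [Finset.sum_ite, Finset.sum_const, Finset.sum_const, nsmul_eq_mul, nsmul_eq_mul, hcard']
    unfold nmask
    ring
  rw [hc]
  unfold fwd
  rw [Finset.sum_mul]
  refine (Finset.abs_sum_le_sum_abs _ _).trans (Finset.sum_le_sum fun x0 _ => ?_)
  rw [abs_mul, abs_of_nonneg (hq0 x0), mul_assoc, Finset.mul_sum]
  refine mul_le_mul_of_nonneg_left ?_ (hq0 x0)
  refine (Finset.abs_sum_le_sum_abs _ _).trans (Finset.sum_le_sum fun i _ => ?_)
  have hp : 0 ≤ ∏ j ∈ Finset.univ.erase i, absK S m t (x0 j) (y j) :=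
    Finset.prod_nonneg fun j _ => absK_nonneg S m t ht _ _
  rw [abs_mul, abs_of_nonneg hp, ← Finset.prod_erase_mul _ _ (Finset.mem_univ i), mul_assoc]
  exact mul_le_mul_of_nonneg_left (absK'_bound S m t ht _ _) hp
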